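/- Let T_{α,N} := ⌈αN⌉ for reals α > 0 and integers N. For each δ > 0 there exist constants c_δ, α_δ, N_δ > 0 such that: (i) for all α ≥ α_δ, all N ≥ N_δ and every initial state σ_* ∈ 𝒮_n, the congestion dynamics satisfies P_{σ_*}( σ(T_{α,N}) ∉ 𝒮(δ) ) ≤ e^{−c_δ N}; and (ii) if σ_* ∈ 𝒮(δ), then for all N ≥ N_δ, P_{σ_*}( ⋃_{0 ≤ t ≤ N²} { σ(t) ∉ 𝒮(2δ) } ) ≤ e^{−c_δ N}. -/

import Mathlib

/-!
The proof is a concentration estimate for each single load. If `ξ_w` is the number of players on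
resource `w` and `g = ξ_w - n / Q`, the congestion dynamics has the exactly linear drift
`E[g(t+1) | σ(t)] = (1 - r) g(t)` with `r = N / (n (1 + N - n))` (`drift_load`), and each step changes
`g` by at most one. Since `1 ≤ n ≤ N`, the rate satisfies `1 / N ≤ r ≤ 1`.

For such a function the bound `exp x ≤ 1 + x + x ^ 2` on `[-1, 1]` gives
`E[exp (θ g(t+1)) | σ(t)] ≤ exp (θ (1 - r) g(t) + θ ^ 2)`, and iterating this contraction yields
`E exp (θ (g(t) - (1 - r) ^ t g(0))) ≤ exp (θ ^ 2 N)` uniformly in `t` (`exp_moment`). By Markov's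
inequality, `g(t)` is within `ε N` of `(1 - r) ^ t g(0)` except with probability
`2 exp (-ε ^ 2 N / 4)` (`deviation`). A union bound over the `Q` resources controls the law at time `t`.

For the burn-in claim, `(1 - r) ^ t` is at most `ε` once `t ≥ N / ε`. For the confinement claim, the
mean `(1 - r) ^ t g(0)` never leaves the initial ball, and a union bound over the `N ^ 2 + 1` times
(`hitProb_le`) costs only a polynomial factor.
-/

open scoped BigOperators
open Filter MeasureTheory

noncomputable section

namespace CongestionPaper

attribute [local instance 10] Classical.propDecidable

/-- Evolution of a distribution under a transition kernel `p` on a finite state space: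
`evolve p mu t` is the law at time `t` of the Markov chain with transition matrix `p`
and initial distribution `mu`. -/
def evolve {X : Type*} [Fintype X] (p : X -> X -> Real) (mu : X -> Real) : Nat -> X -> Real
  | 0 => mu
  | (t+1) => fun y => ∑ x, evolve p mu t x * p x y

/-- Point mass at `x0`. -/
def delta {X : Type*} (x0 : X) : X -> Real := fun x => if x = x0 then 1 else 0

/-- Total variation distance between two distributions on a finite type,
as the supremum over events `A` of the difference of probabilities of `A`. -/
def tvDist {X : Type*} [Fintype X] (mu nu : X -> Real) : Real :=
  ⨆ A : Finset X, |∑ x ∈ A, (mu x - nu x)|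

/-- Total variation distance between the pushforwards of `mu` and `nu` under `m`. -/
def tvDistOn {X : Type*} [Fintype X] {Y : Type*} (m : X -> Y) (mu nu : X -> Real) : Real :=
  ⨆ B : Finset Y, |∑ x : X, (if m x ∈ B then mu x - nu x else 0)|

/-- Worst-case (over the initial state) total variation distance to `pi` at time `t`. -/
def DTV {X : Type*} [Fintype X] (p : X -> X -> Real) (pi : X -> Real) (t : Nat) : Real :=
  ⨆ x0 : X, tvDist (evolve p (delta x0) t) pi

/-- Mixing time `T^mix(eps)`. -/
def Tmix {X : Type*} [Fintype X] (p : X -> X -> Real) (pi : X -> Real) (eps : Real) : Nat :=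
  sInf {t : Nat | DTV p pi t ≤ eps}

/-- Probability of a given trajectory `w` of length `T` for the chain started at `x0`. -/
def pathProb {X : Type*} [Fintype X] (p : X -> X -> Real) (x0 : X) (T : Nat)
    (w : Fin (T+1) -> X) : Real :=
  (if w 0 = x0 then 1 else 0) * ∏ t : Fin T, p (w t.castSucc) (w t.succ)

/-- Probability that some state visited up to time `T` satisfies `Bad`. -/
def hitProb {X : Type*} [Fintype X] (p : X -> X -> Real) (x0 : X) (T : Nat)
    (Bad : X -> Prop) : Real :=
  ∑ w : Fin (T+1) -> X, (if ∃ t, Bad (w t) then pathProb p x0 T w else 0)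

/-! ### The load profile chain -/

/-- Load profiles: `xi : S -> {0,...,kappa}` with `∑ xi v = n`, where `S = Fin Q`. -/
abbrev LoadState (Q kap n : Nat) := {xi : Fin Q -> Fin (kap+1) // (∑ v, ((xi v : Nat))) = n}

/-- Transition matrix of the load profile chain on `Xi_{n,S,kappa}`. -/
def loadP (Q kap n : Nat) (xi xi' : LoadState Q kap n) : Real :=
  if xi' = xi then
    (∑ v, ((xi.1 v : Nat) : Real) * (((1 + kap - (xi.1 v : Nat) : Nat)) : Real))
      / ((n : Real) * ((1 + kap * Q - n : Nat) : Real))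
  else
    (∑ vm, ∑ vp,
      if vm ≠ vp ∧ (xi'.1 vm : Nat) + 1 = (xi.1 vm : Nat) ∧ (xi'.1 vp : Nat) = (xi.1 vp : Nat) + 1 ∧
          (∀ v, v ≠ vm -> v ≠ vp -> xi'.1 v = xi.1 v)
        then ((xi.1 vm : Nat) : Real) * (((kap - (xi.1 vp : Nat) : Nat)) : Real) else 0)
      / ((n : Real) * ((1 + kap * Q - n : Nat) : Real))

/-- Stationary weight `∏_v 1/(xi_v! (kappa - xi_v)!)`. -/
def loadWeight (Q kap n : Nat) (xi : LoadState Q kap n) : Real :=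
  ∏ v, (1 : Real) /
    ((Nat.factorial (xi.1 v : Nat) : Real) * (Nat.factorial (kap - (xi.1 v : Nat)) : Real))

/-- The stationary distribution `pi_n` of the load profile chain. -/
def loadPi (Q kap n : Nat) (xi : LoadState Q kap n) : Real :=
  loadWeight Q kap n xi / (∑ eta : LoadState Q kap n, loadWeight Q kap n eta)

/-- `xi ∈ Xi(delta)`: the normalized load profile is within Euclidean distance `delta`
of the constant vector `(rho/Q)_v`. -/
def loadNear (Q kap n : Nat) (rho : Real) (xi : LoadState Q kap n) (del : Real) : Prop :=
  Real.sqrt (∑ v, (((xi.1 v : Nat) : Real) / ((kap * Q : Nat) : Real) - rho / (Q : Real))^2) ≤ del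

/-- `D(xi, xi') = (1/2) ∑_v |xi_v - xi'_v|`. -/
def loadD (Q kap n : Nat) (xi xi' : LoadState Q kap n) : Real :=
  (1/2) * ∑ v, |((xi.1 v : Nat) : Real) - ((xi'.1 v : Nat) : Real)|

/-! ### The congestion dynamics (Glauber dynamics) -/

/-- `xi_v(sigma)`: the number of players adopting resource `v`. -/
def xiCount {Q n : Nat} (sg : Fin n -> Fin Q) (v : Fin Q) : Nat :=
  (Finset.univ.filter fun i => sg i = v).card

/-- Configurations: `sigma : [n] -> S` with `xi_v(sigma) ≤ kappa` for every `v`. -/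
abbrev ConfigState (Q kap n : Nat) := {sg : Fin n -> Fin Q // ∀ v, xiCount sg v ≤ kap}

/-- Transition matrix of the congestion dynamics. -/
def configP (Q kap n : Nat) (sg sg' : ConfigState Q kap n) : Real :=
  if sg' = sg then
    (∑ i, ((1 + kap - xiCount sg.1 (sg.1 i) : Nat) : Real))
      / ((n : Real) * ((1 + kap * Q - n : Nat) : Real))
  else
    (∑ i, if sg'.1 i ≠ sg.1 i ∧ (∀ j, j ≠ i -> sg'.1 j = sg.1 j)
        then ((kap - xiCount sg.1 (sg'.1 i) : Nat) : Real) else 0)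
      / ((n : Real) * ((1 + kap * Q - n : Nat) : Real))

/-- The potential `F(sigma) = ∑_v ∑_{s=0}^{xi_v(sigma)} (log(kappa+1) - log(kappa+1-s))`. -/
def potF (Q kap n : Nat) (sg : ConfigState Q kap n) : Real :=
  ∑ v, ∑ s ∈ Finset.range (xiCount sg.1 v + 1),
    (Real.log ((kap : Real) + 1) - Real.log ((kap : Real) + 1 - (s : Real)))

/-- The Gibbs measure `mu_n(sigma) = e^{-F(sigma)}/Z_n`. -/
def gibbs (Q kap n : Nat) (sg : ConfigState Q kap n) : Real :=
  Real.exp (-(potF Q kap n sg)) / (∑ ta : ConfigState Q kap n, Real.exp (-(potF Q kap n ta)))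

/-- `sigma ∈ S(delta)`. -/
def configNear (Q kap n : Nat) (rho : Real) (sg : ConfigState Q kap n) (del : Real) : Prop :=
  Real.sqrt (∑ v, ((xiCount sg.1 v : Real) / ((kap * Q : Nat) : Real) - rho / (Q : Real))^2) ≤ del

/-- The load matrix `xi^{sigma0}_{u,v}(sigma)`. -/
def ximat {Q n : Nat} (sg0 sg : Fin n -> Fin Q) (u v : Fin Q) : Nat :=
  (Finset.univ.filter fun i => sg0 i = u ∧ sg i = v).card

/-- `sigma ∈ S(sigma0, delta)`: for each `u`, the normalized `u`-th row of the
load matrix is within Euclidean distance `delta` of the constant vector `(1/Q)_v`. -/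
def configNearMat (Q kap n : Nat) (sg0 sg : ConfigState Q kap n) (del : Real) : Prop :=
  ∀ u, Real.sqrt
      (∑ v, ((ximat sg0.1 sg.1 u v : Real) / (xiCount sg0.1 u : Real) - 1 / (Q : Real))^2) ≤ del

/-- `D^{sigma0}(sigma, sigma') = ∑_u (1/2) ∑_v |xi^{sigma0}_{u,v}(sigma) - xi^{sigma0}_{u,v}(sigma')|`. -/
def matD (Q kap n : Nat) (sg0 sg sg' : ConfigState Q kap n) : Real :=
  ∑ u, (1/2) * ∑ v, |(ximat sg0.1 sg.1 u v : Real) - (ximat sg0.1 sg'.1 u v : Real)|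

/-- The constant `cStar = (sqrt Q/(1-rho) + rho/(2Q))^{1/2}`. -/
def cStar (Q : Nat) (rho : Real) : Real :=
  Real.sqrt (Real.sqrt (Q : Real) / (1 - rho) + rho / (2 * (Q : Real)))

/-! ### The base-exchange chain on `B^(Q)(n)` -/

/-- `B^(Q)(n) = {x ∈ Z_{≥0}^Q : ∑ x_i = n}`. -/
abbrev BState (Q n : Nat) := {x : Fin Q -> Fin (n+1) // (∑ i, ((x i : Nat))) = n}

/-- Transition matrix of the base-exchange chain on `B^(Q)(n)`. -/
def baseP (Q n : Nat) (x y : BState Q n) : Real :=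
  if y = x then
    ∑ i, (if 0 < (x.1 i : Nat) then (1 : Real) / ((Q : Real) * (Q : Real)) else (1 : Real) / (Q : Real))
  else
    ∑ i, ∑ j,
      if i ≠ j ∧ (y.1 i : Nat) + 1 = (x.1 i : Nat) ∧ (y.1 j : Nat) = (x.1 j : Nat) + 1 ∧
          (∀ v, v ≠ i -> v ≠ j -> y.1 v = x.1 v)
        then (1 : Real) / ((Q : Real) * (Q : Real)) else 0

/-- The lazy version of the base-exchange chain. -/
def lazyBaseP (Q n : Nat) (x y : BState Q n) : Real :=
  (1/2) * (if y = x then 1 else 0) + (1/2) * baseP Q n x y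

/-- The uniform distribution on `B^(Q)(n)`. -/
def unifB (Q n : Nat) (x : BState Q n) : Real := 1 / (Fintype.card (BState Q n) : Real)


/-! ### Finite Markov chains -/

/-- The transition operator of `p` acting on functions: `transOp p f x = E_x f(X_1)`. -/
def transOp {X : Type*} [Fintype X] (p : X -> X -> Real) (f : X -> Real) : X -> Real :=
  fun x => ∑ y, p x y * f y

section Chain

variable {X : Type*} [Fintype X] {p : X -> X -> Real}

lemma sum_evolve (mu f : X -> Real) (t : Nat) :
    ∑ x, evolve p mu t x * f x = ∑ x, mu x * (transOp p)^[t] f x := by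
  induction t generalizing f with
  | zero => simp [evolve]
  | succ t ih =>
    rw [Function.iterate_succ_apply, ← ih]
    simp only [evolve, transOp, Finset.sum_mul, Finset.mul_sum]
    rw [Finset.sum_comm]
    simp only [mul_assoc]

lemma sum_evolve_delta (x0 : X) (f : X -> Real) (t : Nat) :
    ∑ x, evolve p (delta x0) t x * f x = (transOp p)^[t] f x0 := by
  rw [sum_evolve]
  simp [delta]

lemma transOp_mono (hp : ∀ x y, 0 ≤ p x y) {f g : X -> Real} (h : ∀ x, f x ≤ g x) (x : X) :
    transOp p f x ≤ transOp p g x :=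
  Finset.sum_le_sum fun y _ => mul_le_mul_of_nonneg_left (h y) (hp x y)

lemma iter_mono (hp : ∀ x y, 0 ≤ p x y) {f g : X -> Real} (h : ∀ x, f x ≤ g x) (t : Nat) (x : X) :
    (transOp p)^[t] f x ≤ (transOp p)^[t] g x := by
  induction t generalizing f g with
  | zero => exact h x
  | succ t ih =>
    rw [Function.iterate_succ_apply, Function.iterate_succ_apply]
    exact ih fun y => transOp_mono hp h y

lemma iter_const_mul (c : Real) (f : X -> Real) (t : Nat) (x : X) :
    (transOp p)^[t] (fun y => c * f y) x = c * (transOp p)^[t] f x := by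
  rw [← sum_evolve_delta, ← sum_evolve_delta, Finset.mul_sum]
  exact Finset.sum_congr rfl fun y _ => by ring

lemma iter_sum {ι : Type*} (s : Finset ι) (f : ι -> X -> Real) (t : Nat) (x : X) :
    (transOp p)^[t] (fun y => ∑ i ∈ s, f i y) x = ∑ i ∈ s, (transOp p)^[t] (f i) x := by
  simp only [← sum_evolve_delta, Finset.mul_sum]
  exact Finset.sum_comm

lemma iter_add (f g : X -> Real) (t : Nat) (x : X) :
    (transOp p)^[t] (fun y => f y + g y) x = (transOp p)^[t] f x + (transOp p)^[t] g x := by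
  simp only [← sum_evolve_delta, mul_add, Finset.sum_add_distrib]

/-- The Markov property at time one, for path sums. -/
lemma sum_path_succ (x0 : X) (T : Nat) (G : (Fin (T+2) -> X) -> Real) :
    ∑ w, G w * pathProb p x0 (T+1) w =
      ∑ y, p x0 y * ∑ w, G (Fin.cons x0 w) * pathProb p y T w := by
  rw [← (Fin.consEquiv fun _ : Fin (T+2) => X).sum_comp, Fintype.sum_prod_type]
  simp only [Fin.consEquiv_apply, pathProb, Fin.prod_univ_succ (n := T), Fin.cons_zero,
    Fin.castSucc_zero, Fin.cons_succ, ← Fin.succ_castSucc]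
  rw [Finset.sum_eq_single x0 (fun b _ hb => by simp [hb]) (by simp)]
  simp only [Finset.mul_sum]
  rw [Finset.sum_comm]
  refine Finset.sum_congr rfl fun w _ => ?_
  rw [Finset.sum_eq_single (w 0) (fun b _ hb => by simp [hb.symm]) (by simp)]
  simp only [if_true]
  change G (Fin.cons x0 w) * _ = _
  ring

lemma sum_pathProb (hp1 : ∀ x, ∑ y, p x y = 1) (x0 : X) (T : Nat) :
    ∑ w, pathProb p x0 T w = 1 := by
  induction T generalizing x0 with
  | zero =>
    rw [← (Equiv.funUnique (Fin 1) X).symm.sum_comp]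
    simp [pathProb]
  | succ T ih =>
    have := sum_path_succ (p := p) x0 T (fun _ => 1)
    simpa [ih, hp1] using this

/-- Union bound: the probability of ever being in `Bad` up to time `T` is at most the sum over the
times `t ≤ T` of the probability of being in `Bad` at time `t`. -/
lemma hitProb_le (hp : ∀ x y, 0 ≤ p x y) (hp1 : ∀ x, ∑ y, p x y = 1) (Bad : X -> Prop)
    (x0 : X) (T : Nat) :
    hitProb p x0 T Bad ≤
      ∑ t ∈ Finset.range (T+1), (transOp p)^[t] (fun x => if Bad x then 1 else 0) x0 := by
  have hnn : ∀ t x, 0 ≤ (transOp p)^[t] (fun x => if Bad x then (1:Real) else 0) x := by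
    intro t x
    have h := iter_mono hp (f := fun _ => (0:Real) * 0) (g := fun x => if Bad x then (1:Real) else 0)
      (fun x => by split_ifs <;> norm_num) t x
    rw [iter_const_mul (p := p) 0 (fun _ => 0)] at h
    simpa using h
  induction T generalizing x0 with
  | zero =>
    unfold hitProb
    rw [← (Equiv.funUnique (Fin 1) X).symm.sum_comp]
    rw [Finset.sum_eq_single x0]
    · simp [pathProb]
    · intro b _ hb
      simp [pathProb, hb]
    · simp
  | succ T ih =>
    rw [Finset.sum_range_succ']
    by_cases hb : Bad x0
    · have h1 : hitProb p x0 (T+1) Bad ≤ 1 := by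
        rw [← sum_pathProb hp1 x0 (T+1)]
        refine Finset.sum_le_sum fun w _ => ?_
        have h0 : 0 ≤ pathProb p x0 (T+1) w := by
          unfold pathProb
          refine mul_nonneg (by split_ifs <;> norm_num) (Finset.prod_nonneg fun _ _ => hp _ _)
        split_ifs
        · exact le_rfl
        · exact h0
      have h2 : 0 ≤ ∑ k ∈ Finset.range (T+1),
          (transOp p)^[k+1] (fun x => if Bad x then (1:Real) else 0) x0 :=
        Finset.sum_nonneg fun k _ => hnn _ _
      simp only [Function.iterate_zero, id_eq, hb, if_true]
      linarith
    · have h1 : hitProb p x0 (T+1) Bad = ∑ y, p x0 y * hitProb p y T Bad := by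
        have := sum_path_succ (p := p) x0 T (fun w => if ∃ t, Bad (w t) then 1 else 0)
        simp only [ite_mul, one_mul, zero_mul, Fin.exists_fin_succ (n := T+1), Fin.cons_zero, hb,
          false_or, Fin.cons_succ] at this
        simp only [hitProb]
        rw [← this]
        refine Finset.sum_congr rfl fun w _ => ?_
        by_cases hw : w 0 = x0
        · simp [Fin.exists_fin_succ (n := T+1), hw, hb]
        · simp [pathProb, hw]
      rw [h1]
      have h2 : ∑ y, p x0 y * hitProb p y T Bad ≤ ∑ y, p x0 y *
          ∑ t ∈ Finset.range (T+1), (transOp p)^[t] (fun x => if Bad x then 1 else 0) y :=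
        Finset.sum_le_sum fun y _ => mul_le_mul_of_nonneg_left (ih y) (hp _ _)
      refine h2.trans ?_
      simp only [Finset.mul_sum]
      rw [Finset.sum_comm]
      simp only [Function.iterate_succ_apply', Function.iterate_zero, id_eq, hb, if_false, add_zero]
      exact le_rfl

/-! ### Concentration for functions with linear drift -/

variable {g : X -> Real} {r B : Real}

lemma exp_step (hp : ∀ x y, 0 ≤ p x y) (hp1 : ∀ x, ∑ y, p x y = 1)
    (hg : ∀ x y, p x y ≠ 0 → |g y - g x| ≤ 1) (hd : ∀ x, ∑ y, p x y * (g y - g x) = -r * g x)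
    {th : Real} (hth : |th| ≤ 1) (x : X) :
    transOp p (fun y => Real.exp (th * g y)) x
      ≤ Real.exp (th ^ 2) * Real.exp (th * (1 - r) * g x) := by
  have h1 : transOp p (fun y => Real.exp (th * g y)) x ≤
      ∑ y, p x y * (Real.exp (th * g x) * (1 + th * (g y - g x) + th ^ 2)) := by
    refine Finset.sum_le_sum fun y _ => ?_
    by_cases h0 : p x y = 0
    · simp [h0]
    refine mul_le_mul_of_nonneg_left ?_ (hp x y)
    have hy := hg x y h0
    have h2 : |th * (g y - g x)| ≤ 1 := by
      rw [abs_mul]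
      exact mul_le_one₀ hth (abs_nonneg _) hy
    have h3 := (abs_le.mp (Real.abs_exp_sub_one_sub_id_le h2)).2
    have h4 : (th * (g y - g x)) ^ 2 ≤ th ^ 2 := by
      rw [mul_pow]
      have : (g y - g x) ^ 2 ≤ 1 := (sq_le_one_iff_abs_le_one _).mpr hy
      nlinarith [sq_nonneg th]
    have h5 : Real.exp (th * g y) = Real.exp (th * g x) * Real.exp (th * (g y - g x)) := by
      rw [← Real.exp_add]
      congr 1
      ring
    change Real.exp (th * g y) ≤ _
    rw [h5]
    exact mul_le_mul_of_nonneg_left (by linarith) (Real.exp_pos _).le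
  have h2 : ∑ y, p x y * (Real.exp (th * g x) * (1 + th * (g y - g x) + th ^ 2)) =
      Real.exp (th * g x) * (1 + th * (-r * g x) + th ^ 2) := by
    rw [← hd x]
    calc _ = Real.exp (th * g x) * ((1 + th ^ 2) * ∑ y, p x y
            + th * ∑ y, p x y * (g y - g x)) := by
          simp only [Finset.mul_sum, ← Finset.sum_add_distrib]
          exact Finset.sum_congr rfl fun y _ => by ring
      _ = _ := by rw [hp1]; ring
  rw [h2] at h1
  refine h1.trans ?_
  have h3 : Real.exp (th ^ 2) * Real.exp (th * (1 - r) * g x) =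
      Real.exp (th * g x) * Real.exp (th * (-r * g x) + th ^ 2) := by
    rw [← Real.exp_add, ← Real.exp_add]
    congr 1
    ring
  rw [h3]
  refine mul_le_mul_of_nonneg_left ?_ (Real.exp_pos _).le
  linarith [Real.add_one_le_exp (th * (-r * g x) + th ^ 2)]

/-- Iterating `exp_step` replaces `th` by `th * (1 - r)` at each step, so the quadratic errors form a
geometric series whose sum is at most `th ^ 2 / r ≤ th ^ 2 * B`. -/
lemma exp_moment (hp : ∀ x y, 0 ≤ p x y) (hp1 : ∀ x, ∑ y, p x y = 1)
    (hg : ∀ x y, p x y ≠ 0 → |g y - g x| ≤ 1) (hd : ∀ x, ∑ y, p x y * (g y - g x) = -r * g x)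
    (hr0 : 0 ≤ r) (hr1 : r ≤ 1) (hB : 1 ≤ r * B) (hB0 : 0 ≤ B)
    (t : Nat) {th : Real} (hth : |th| ≤ 1) (x : X) :
    (transOp p)^[t] (fun y => Real.exp (th * g y)) x
      ≤ Real.exp (th * ((1 - r) ^ t * g x) + th ^ 2 * B) := by
  induction t generalizing th with
  | zero =>
    simp only [Function.iterate_zero, id_eq, pow_zero, one_mul]
    exact Real.exp_le_exp.mpr (by nlinarith [sq_nonneg th])
  | succ t ih =>
    rw [Function.iterate_succ_apply]
    refine (iter_mono hp (exp_step hp hp1 hg hd hth) t x).trans ?_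
    rw [iter_const_mul]
    have hth' : |th * (1 - r)| ≤ 1 := by
      rw [abs_mul, abs_of_nonneg (by linarith : (0:Real) ≤ 1 - r)]
      exact mul_le_one₀ hth (by linarith) (by linarith)
    refine (mul_le_mul_of_nonneg_left (ih hth') (Real.exp_pos _).le).trans ?_
    rw [← Real.exp_add]
    refine Real.exp_le_exp.mpr ?_
    have h1 : 1 + (1 - r) ^ 2 * B ≤ B := by nlinarith [mul_nonneg hr0 (sub_nonneg.mpr hr1)]
    have h2 := mul_le_mul_of_nonneg_left h1 (sq_nonneg th)
    have h3 : th * (1 - r) * ((1 - r) ^ t * g x) = th * ((1 - r) ^ (t+1) * g x) := by ring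
    rw [h3]
    nlinarith

lemma deviation (hp : ∀ x y, 0 ≤ p x y) (hp1 : ∀ x, ∑ y, p x y = 1)
    (hg : ∀ x y, p x y ≠ 0 → |g y - g x| ≤ 1) (hd : ∀ x, ∑ y, p x y * (g y - g x) = -r * g x)
    (hr0 : 0 ≤ r) (hr1 : r ≤ 1) (hB : 1 ≤ r * B) (hB0 : 0 ≤ B) {e : Real} (he0 : 0 < e)
    (he1 : e ≤ 1) (t : Nat) (x0 : X) :
    (transOp p)^[t] (fun x => if e * B < |g x - (1 - r) ^ t * g x0| then 1 else 0) x0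
      ≤ 2 * Real.exp (-(e ^ 2 / 4) * B) := by
  set m := (1 - r) ^ t * g x0 with hm
  have hth : |e / 2| ≤ 1 := by rw [abs_of_pos (by linarith)]; linarith
  have hth' : |-(e / 2)| ≤ 1 := by rwa [abs_neg]
  -- Chernoff's bound with parameter `± e / 2`, the minimiser of `θ ^ 2 B - θ e B`.
  have h1 : ∀ x, (if e * B < |g x - m| then (1:Real) else 0) ≤
      Real.exp (-(e / 2) * (e * B) - (e / 2) * m) * Real.exp ((e / 2) * g x) +
      Real.exp (-(e / 2) * (e * B) + (e / 2) * m) * Real.exp (-(e / 2) * g x) := by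
    intro x
    rw [← Real.exp_add, ← Real.exp_add]
    split_ifs with h
    · rcases lt_abs.mp h with h | h
      · have := Real.one_le_exp (x := -(e / 2) * (e * B) - (e / 2) * m + (e / 2) * g x)
          (by nlinarith)
        linarith [Real.exp_pos (-(e / 2) * (e * B) + (e / 2) * m + -(e / 2) * g x)]
      · have := Real.one_le_exp (x := -(e / 2) * (e * B) + (e / 2) * m + -(e / 2) * g x)
          (by nlinarith)
        linarith [Real.exp_pos (-(e / 2) * (e * B) - (e / 2) * m + (e / 2) * g x)]
    · positivity
  refine (iter_mono hp h1 t x0).trans ?_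
  rw [iter_add, iter_const_mul, iter_const_mul]
  have h2 := exp_moment hp hp1 hg hd hr0 hr1 hB hB0 t hth x0
  have h3 := exp_moment hp hp1 hg hd hr0 hr1 hB hB0 t hth' x0
  have h2' := mul_le_mul_of_nonneg_left h2
    (Real.exp_pos (-(e / 2) * (e * B) - (e / 2) * m)).le
  have h3' := mul_le_mul_of_nonneg_left h3
    (Real.exp_pos (-(e / 2) * (e * B) + (e / 2) * m)).le
  rw [← Real.exp_add, ← hm] at h2' h3'
  have e1 : -(e / 2) * (e * B) - (e / 2) * m + (e / 2 * m + (e / 2) ^ 2 * B)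
      = -(e ^ 2 / 4) * B := by ring
  have e2 : -(e / 2) * (e * B) + (e / 2) * m + (-(e / 2) * m + (-(e / 2)) ^ 2 * B)
      = -(e ^ 2 / 4) * B := by ring
  rw [e1] at h2'
  rw [e2] at h3'
  linarith

end Chain

/-! ### The congestion dynamics -/

section Config

variable {Q kap n : Nat}

lemma sum_xiCount (sg : Fin n -> Fin Q) : ∑ v, xiCount sg v = n := by
  have := Finset.card_eq_sum_card_fiberwise (s := (Finset.univ : Finset (Fin n)))
    (t := (Finset.univ : Finset (Fin Q))) (f := sg) (fun _ _ => Finset.mem_univ _)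
  simpa [xiCount] using this.symm

lemma xiCount_eq_sum (sg : Fin n -> Fin Q) (w : Fin Q) :
    (xiCount sg w : Real) = ∑ i, if sg i = w then (1:Real) else 0 := by
  simp [xiCount]

lemma xiCount_update (sg : Fin n -> Fin Q) (i : Fin n) (v w : Fin Q) :
    (xiCount (Function.update sg i v) w : Real) - xiCount sg w =
      (if v = w then 1 else 0) - (if sg i = w then 1 else 0) := by
  rw [xiCount_eq_sum, xiCount_eq_sum, ← Finset.sum_sub_distrib, Finset.sum_eq_single i]
  · simp
  · intro j _ hj
    simp [Function.update_of_ne hj]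
  · simp

lemma eq_update_of {sg f : Fin n -> Fin Q} {i : Fin n} (h : ∀ j, j ≠ i -> f j = sg j) :
    f = Function.update sg i (f i) := by
  funext j
  by_cases hj : j = i
  · subst hj; simp
  · simp [Function.update_of_ne hj, h j hj]

lemma configP_nonneg (x y : ConfigState Q kap n) : 0 ≤ configP Q kap n x y := by
  unfold configP
  split_ifs
  · positivity
  · refine div_nonneg (Finset.sum_nonneg fun i _ => ?_) (by positivity)
    split_ifs <;> positivity

lemma sum_single_flip (sg : ConfigState Q kap n) (i : Fin n) (F : (Fin n -> Fin Q) -> Real) :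
    (∑ y : ConfigState Q kap n,
      if y.1 i ≠ sg.1 i ∧ (∀ j, j ≠ i -> y.1 j = sg.1 j)
        then ((kap - xiCount sg.1 (y.1 i) : Nat) : Real) * F y.1 else 0) =
    ∑ v, if v ≠ sg.1 i then
      ((kap - xiCount sg.1 v : Nat) : Real) * F (Function.update sg.1 i v) else 0 := by
  rw [← Finset.sum_filter, ← Finset.sum_filter]
  -- The flips to a saturated resource leave the state space, but carry weight zero.
  refine Finset.sum_bij_ne_zero (fun y _ _ => y.1 i) ?_ ?_ ?_ ?_
  · intro y hy _
    simp only [Finset.mem_filter, Finset.mem_univ, true_and] at hy ⊢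
    exact hy.1
  · intro y hy _ z hz _ hyz
    simp only [Finset.mem_filter, Finset.mem_univ, true_and] at hy hz
    apply Subtype.ext
    rw [eq_update_of hy.2, eq_update_of hz.2, hyz]
  · intro v hv hne
    simp only [Finset.mem_filter, Finset.mem_univ, true_and] at hv
    have hlt : xiCount sg.1 v < kap := by
      by_contra hcon
      rw [Nat.sub_eq_zero_of_le (not_lt.mp hcon)] at hne
      simp at hne
    have hmem : ∀ w, xiCount (Function.update sg.1 i v) w ≤ kap := by
      intro w
      have h1 := xiCount_update sg.1 i v w
      have h2 : (xiCount (Function.update sg.1 i v) w : Real) ≤ kap := by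
        by_cases hvw : v = w
        · subst hvw
          have h3 : (xiCount sg.1 v : Real) + 1 ≤ kap := by exact_mod_cast hlt
          simp only [if_true, hv.symm, if_false] at h1
          linarith
        · have h3 : (xiCount sg.1 w : Real) ≤ kap := by exact_mod_cast sg.2 w
          simp only [hvw, if_false] at h1
          split_ifs at h1 <;> linarith
      exact_mod_cast h2
    refine ⟨⟨Function.update sg.1 i v, hmem⟩, ?_, ?_, ?_⟩
    · simp only [Finset.mem_filter, Finset.mem_univ, true_and, Function.update_self]
      exact ⟨hv, fun j hj => Function.update_of_ne hj _ _⟩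
    · simpa using hne
    · simp
  · intro y hy _
    simp only [Finset.mem_filter, Finset.mem_univ, true_and] at hy
    rw [← eq_update_of hy.2]

/-- One step of the dynamics: a uniform player `i` stays with weight one, or picks the resource `v`
with weight `kap - xiCount sg v`; here `v = sg i` is allowed and is another way to stay. -/
lemma transOp_configP (sg : ConfigState Q kap n) (F : (Fin n -> Fin Q) -> Real) :
    ∑ y : ConfigState Q kap n, configP Q kap n sg y * F y.1 =
      (∑ i, (F sg.1 + ∑ v, ((kap : Real) - xiCount sg.1 v) * F (Function.update sg.1 i v)))
        / ((n : Real) * ((1 + kap * Q - n : Nat) : Real)) := by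
  set D := (n : Real) * ((1 + kap * Q - n : Nat) : Real) with hD
  have hsub : ∀ v, ((kap - xiCount sg.1 v : Nat) : Real) = (kap : Real) - xiCount sg.1 v :=
    fun v => Nat.cast_sub (sg.2 v)
  have h1 : ∀ y : ConfigState Q kap n, configP Q kap n sg y * F y.1 =
      (if y = sg then (∑ i, ((1 + kap - xiCount sg.1 (sg.1 i) : Nat) : Real)) * F sg.1 / D else 0) +
      (∑ i, if y.1 i ≠ sg.1 i ∧ (∀ j, j ≠ i -> y.1 j = sg.1 j)
        then ((kap - xiCount sg.1 (y.1 i) : Nat) : Real) * F y.1 else 0) / D := by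
    intro y
    unfold configP
    rw [← hD]
    by_cases h : y = sg
    · subst h
      simp
      ring
    · simp only [h, if_false, zero_add]
      rw [div_mul_eq_mul_div, Finset.sum_mul]
      simp only [ite_mul, zero_mul]
  simp only [h1, Finset.sum_add_distrib, Finset.sum_ite_eq', Finset.mem_univ, if_true]
  rw [← Finset.sum_div, Finset.sum_comm]
  simp only [sum_single_flip]
  rw [← add_div, Finset.sum_mul, ← Finset.sum_add_distrib, ← Finset.sum_add_distrib]
  congr 1
  refine Finset.sum_congr rfl fun i _ => ?_
  have h2 : ((1 + kap - xiCount sg.1 (sg.1 i) : Nat) : Real) =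
      1 + ((kap : Real) - xiCount sg.1 (sg.1 i)) := by
    rw [Nat.add_sub_assoc (sg.2 _), Nat.cast_add, hsub, Nat.cast_one]
  rw [h2, ← Finset.add_sum_erase _ (fun v => ((kap : Real) - xiCount sg.1 v) *
    F (Function.update sg.1 i v)) (Finset.mem_univ (sg.1 i)), Function.update_eq_self,
    ← Finset.sum_filter, Finset.filter_ne']
  simp only [hsub]
  ring

lemma sum_configP (hn : 1 ≤ n) (hnN : n ≤ kap * Q) (sg : ConfigState Q kap n) :
    ∑ y, configP Q kap n sg y = 1 := by
  have h := transOp_configP sg (fun _ => 1)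
  simp only [mul_one] at h
  rw [h]
  have h1 : ∑ v, ((kap : Real) - xiCount sg.1 v) = kap * Q - n := by
    have := congrArg (Nat.cast : Nat → Real) (sum_xiCount sg.1)
    push_cast at this
    rw [Finset.sum_sub_distrib, this]
    simp [mul_comm]
  have h2 : ((1 + kap * Q - n : Nat) : Real) = 1 + (kap * Q - n) := by
    rw [Nat.cast_sub (by omega)]
    push_cast
    ring
  rw [h1, h2]
  have h3 : (0:Real) < n := by exact_mod_cast hn
  have h4 : (n : Real) ≤ kap * Q := by exact_mod_cast hnN
  rw [Finset.sum_const, Finset.card_univ, Fintype.card_fin, nsmul_eq_mul]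
  exact div_self (mul_pos h3 (by linarith)).ne'

lemma step_load (w : Fin Q) (x y : ConfigState Q kap n) (h : configP Q kap n x y ≠ 0) :
    |((xiCount y.1 w : Real) - n / Q) - ((xiCount x.1 w : Real) - n / Q)| ≤ 1 := by
  rw [sub_sub_sub_cancel_right]
  by_cases hxy : y = x
  · simp [hxy]
  unfold configP at h
  rw [if_neg hxy] at h
  have h1 := (div_ne_zero_iff.mp h).1
  obtain ⟨i, _, hi⟩ := Finset.exists_ne_zero_of_sum_ne_zero h1
  have hc := (ite_ne_right_iff.mp hi).1
  rw [eq_update_of hc.2, xiCount_update]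
  split_ifs <;> norm_num

lemma drift_load (hQ : 0 < Q) (w : Fin Q) (x : ConfigState Q kap n) :
    ∑ y : ConfigState Q kap n, configP Q kap n x y *
      (((xiCount y.1 w : Real) - n / Q) - ((xiCount x.1 w : Real) - n / Q)) =
    -(((kap * Q : Nat) : Real) / ((n : Real) * ((1 + kap * Q - n : Nat) : Real))) *
      ((xiCount x.1 w : Real) - n / Q) := by
  have h := transOp_configP x (fun f => (xiCount f w : Real) - xiCount x.1 w)
  simp only [sub_sub_sub_cancel_right]
  rw [h, neg_mul, div_mul_eq_mul_div, ← neg_div]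
  congr 1
  simp only [xiCount_update, sub_self, zero_add, mul_sub, Finset.sum_sub_distrib]
  have h1 : ∀ c : Real, ∑ v, (xiCount x.1 v : Real) * c = n * c := by
    intro c
    rw [← Finset.sum_mul, ← Nat.cast_sum, sum_xiCount]
  have hQ' : (Q : Real) ≠ 0 := by positivity
  simp only [sub_mul, Finset.sum_sub_distrib, h1]
  simp only [mul_ite, mul_one, mul_zero, Finset.sum_ite_eq', Finset.mem_univ, if_true,
    Finset.sum_const, Finset.card_univ, Fintype.card_fin, nsmul_eq_mul]
  have h2 : ∀ c : Real, (∑ i, if x.1 i = w then c else 0) = xiCount x.1 w * c := by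
    intro c
    rw [xiCount_eq_sum, Finset.sum_mul]
    simp only [ite_mul, one_mul, zero_mul]
  simp only [h2]
  push_cast
  field_simp
  ring

lemma rate_bounds (hn : 1 ≤ n) (hnN : n ≤ kap * Q) :
    0 ≤ ((kap * Q : Nat) : Real) / ((n : Real) * ((1 + kap * Q - n : Nat) : Real)) ∧
    ((kap * Q : Nat) : Real) / ((n : Real) * ((1 + kap * Q - n : Nat) : Real)) ≤ 1 ∧
    1 ≤ ((kap * Q : Nat) : Real) / ((n : Real) * ((1 + kap * Q - n : Nat) : Real))
      * ((kap * Q : Nat) : Real) := by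
  generalize kap * Q = N at *
  have h1 : (1:Real) ≤ n := by exact_mod_cast hn
  have h2 : (n:Real) ≤ N := by exact_mod_cast hnN
  have h3 : ((1 + N - n : Nat) : Real) = 1 + N - n := by
    rw [Nat.cast_sub (by omega)]
    push_cast
    ring
  rw [h3]
  have h4 : 0 < (n : Real) * (1 + N - n) := mul_pos (by linarith) (by linarith)
  refine ⟨by positivity, ?_, ?_⟩
  · rw [div_le_one h4]
    nlinarith [mul_nonneg (sub_nonneg.mpr h1) (sub_nonneg.mpr h2)]
  · rw [div_mul_eq_mul_div, le_div_iff₀ h4]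
    nlinarith

/-- If the event `Bad` forces one of the loads to deviate by `e N` from its mean at time `t`, then it
has exponentially small probability at that time. -/
lemma prob_bad_le (hQ : 0 < Q) (hn : 1 ≤ n) (hnN : n ≤ kap * Q) {e : Real} (he0 : 0 < e)
    (he1 : e ≤ 1) (t : Nat) (x0 : ConfigState Q kap n) (Bad : ConfigState Q kap n -> Prop)
    {dec : DecidablePred Bad} (hBad : ∀ x, Bad x → ∃ w, e * ((kap * Q : Nat) : Real) <
      |((xiCount x.1 w : Real) - n / Q) -
        (1 - ((kap * Q : Nat) : Real) / ((n : Real) * ((1 + kap * Q - n : Nat) : Real))) ^ t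
          * ((xiCount x0.1 w : Real) - n / Q)|) :
    (transOp (configP Q kap n))^[t] (fun x => if Bad x then 1 else 0) x0 ≤
      Q * (2 * Real.exp (-(e ^ 2 / 4) * ((kap * Q : Nat) : Real))) := by
  obtain ⟨hr0, hr1, hr2⟩ := rate_bounds hn hnN
  have h1 := fun w : Fin Q => deviation (p := configP Q kap n)
    (g := fun x => (xiCount x.1 w : Real) - n / Q) configP_nonneg
    (sum_configP hn hnN) (step_load w) (drift_load hQ w) hr0 hr1 hr2 (Nat.cast_nonneg _) he0 he1 t x0
  have h2 := Finset.sum_le_sum fun w (_ : w ∈ (Finset.univ : Finset (Fin Q))) => h1 w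
  rw [← iter_sum] at h2
  refine (iter_mono configP_nonneg (fun x => ?_) t x0).trans (h2.trans_eq (by simp))
  have hnn : ∀ w ∈ (Finset.univ : Finset (Fin Q)), (0:Real) ≤
      if e * ((kap * Q : Nat) : Real) < |((xiCount x.1 w : Real) - n / Q) -
        (1 - ((kap * Q : Nat) : Real) / ((n : Real) * ((1 + kap * Q - n : Nat) : Real))) ^ t
          * ((xiCount x0.1 w : Real) - n / Q)| then 1 else 0 := by
    intro w _
    split_ifs <;> norm_num
  by_cases hx : Bad x
  · obtain ⟨w, hw⟩ := hBad x hx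
    refine le_trans ?_ (Finset.single_le_sum hnn (Finset.mem_univ w))
    rw [if_pos hx, if_pos hw]
  · simp only [hx, if_false]
    exact Finset.sum_nonneg hnn

/-- Burn-in: once the mean deviation factor `a` is at most `e`, a configuration whose loads are within
`e N` of their means lies in `S(del)`. -/
lemma near_of_small {rho del e a N : Real} (hQ : 0 < Q) (hN : 0 < N) (hNk : N = ((kap * Q : Nat) : Real))
    (he : 3 * e * Q ≤ del) (he0 : 0 < e) (hNe : 1 ≤ e * N) (hn1 : (n : Real) ≤ rho * N)
    (hn2 : rho * N < n + 1) (hnN : (n : Real) ≤ N) (ha0 : 0 ≤ a) (ha1 : a ≤ e)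
    (x x0 : ConfigState Q kap n)
    (h : ∀ w, |((xiCount x.1 w : Real) - n / Q) - a * ((xiCount x0.1 w : Real) - n / Q)| ≤ e * N) :
    configNear Q kap n rho x del := by
  have hQ1 : (1:Real) ≤ Q := by exact_mod_cast hQ
  have hd0 : 0 ≤ del := le_trans (by positivity) he
  unfold configNear
  rw [← hNk, Real.sqrt_le_left hd0]
  have key : ∀ w, ((xiCount x.1 w : Real) / N - rho / Q) ^ 2 ≤ 9 * e ^ 2 := by
    intro w
    have h1 := abs_le.mp (h w)
    have h2 : (xiCount x0.1 w : Real) ≤ n := by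
      have := Finset.single_le_sum (f := xiCount x0.1) (fun _ _ => Nat.zero_le _) (Finset.mem_univ w)
      rw [sum_xiCount] at this
      exact_mod_cast this
    have h3 : (0:Real) ≤ n / Q := by positivity
    have h4 : (n:Real) / Q ≤ n := div_le_self (by positivity) hQ1
    have h5 : (0:Real) ≤ xiCount x0.1 w := by positivity
    have h6 : |a * ((xiCount x0.1 w : Real) - n / Q)| ≤ e * N := by
      rw [abs_mul, abs_of_nonneg ha0]
      exact mul_le_mul ha1 (abs_le.mpr ⟨by linarith, by linarith⟩) (abs_nonneg _) he0.le
    have h7 := abs_le.mp h6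
    have h8 : |(n - rho * N) / Q| ≤ e * N := by
      rw [abs_div, abs_of_pos (by linarith : (0:Real) < Q)]
      refine (div_le_self (abs_nonneg _) hQ1).trans (le_trans ?_ hNe)
      exact abs_le.mpr ⟨by linarith, by linarith⟩
    have h9 := abs_le.mp h8
    have h10 : (xiCount x.1 w : Real) / N - rho / Q =
        ((xiCount x.1 w : Real) - n / Q + (n - rho * N) / Q) / N := by
      field_simp
      ring
    have h11 : |(xiCount x.1 w : Real) / N - rho / Q| ≤ 3 * e := by
      rw [h10, abs_div, abs_of_pos hN, div_le_iff₀ hN]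
      exact abs_le.mpr ⟨by linarith, by linarith⟩
    have h12 := sq_le_sq' (abs_le.mp h11).1 (abs_le.mp h11).2
    linarith
  refine (Finset.sum_le_sum fun w _ => key w).trans ?_
  rw [Finset.sum_const, Finset.card_univ, Fintype.card_fin, nsmul_eq_mul]
  have h1 : (3 * e * Q) ^ 2 ≤ del ^ 2 := by gcongr
  nlinarith [mul_nonneg (sq_nonneg e) (by linarith : (0:Real) ≤ Q)]

/-- Confinement: started from `S(del)`, a configuration whose loads are within `e N` of their means
lies in `S(2 * del)`. -/
lemma near_of_near {rho del e a N : Real} (hQ : 0 < Q) (hN : 0 < N) (hNk : N = ((kap * Q : Nat) : Real))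
    (he : 3 * e * Q ≤ del) (he0 : 0 < e) (hNe : 1 ≤ e * N) (hn1 : (n : Real) ≤ rho * N)
    (hn2 : rho * N < n + 1) (ha0 : 0 ≤ a) (ha1 : a ≤ 1)
    (x x0 : ConfigState Q kap n) (hx0 : configNear Q kap n rho x0 del)
    (h : ∀ w, |((xiCount x.1 w : Real) - n / Q) - a * ((xiCount x0.1 w : Real) - n / Q)| ≤ e * N) :
    configNear Q kap n rho x (2 * del) := by
  have hQ1 : (1:Real) ≤ Q := by exact_mod_cast hQ
  have hd0 : 0 ≤ del := le_trans (by positivity) he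
  unfold configNear at hx0 ⊢
  rw [← hNk, Real.sqrt_le_left hd0] at hx0
  rw [← hNk, Real.sqrt_le_left (by linarith)]
  have key : ∀ w, ((xiCount x.1 w : Real) / N - rho / Q) ^ 2 ≤
      2 * ((xiCount x0.1 w : Real) / N - rho / Q) ^ 2 + 8 * e ^ 2 := by
    intro w
    have h1 := abs_le.mp (h w)
    have h8 : |(1 - a) * ((n - rho * N) / Q)| ≤ e * N := by
      rw [abs_mul, abs_div, abs_of_pos (by linarith : (0:Real) < Q),
        abs_of_nonneg (by linarith : 0 ≤ 1 - a)]
      refine (mul_le_of_le_one_left (by positivity) (by linarith)).trans ?_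
      refine (div_le_self (abs_nonneg _) hQ1).trans (le_trans ?_ hNe)
      exact abs_le.mpr ⟨by linarith, by linarith⟩
    have h9 := abs_le.mp h8
    set R := (((xiCount x.1 w : Real) - n / Q) - a * ((xiCount x0.1 w : Real) - n / Q)
      + (1 - a) * ((n - rho * N) / Q)) / N with hR
    have h10 : (xiCount x.1 w : Real) / N - rho / Q =
        a * ((xiCount x0.1 w : Real) / N - rho / Q) + R := by
      rw [hR]
      field_simp
      ring
    have h11 : |R| ≤ 2 * e := by
      rw [hR, abs_div, abs_of_pos hN, div_le_iff₀ hN]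
      exact abs_le.mpr ⟨by linarith, by linarith⟩
    have h12 := sq_le_sq' (abs_le.mp h11).1 (abs_le.mp h11).2
    rw [h10]
    set y := (xiCount x0.1 w : Real) / N - rho / Q
    have h13 : (a * y) ^ 2 ≤ y ^ 2 := by
      rw [mul_pow]
      exact mul_le_of_le_one_left (sq_nonneg y) (pow_le_one₀ ha0 ha1)
    nlinarith [sq_nonneg (a * y - R)]
  refine (Finset.sum_le_sum fun w _ => key w).trans ?_
  rw [Finset.sum_add_distrib, ← Finset.mul_sum, Finset.sum_const, Finset.card_univ,
    Fintype.card_fin, nsmul_eq_mul]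
  have h1 : (3 * e * Q) ^ 2 ≤ del ^ 2 := by gcongr
  nlinarith [mul_nonneg (sq_nonneg e) (by linarith : (0:Real) ≤ Q)]

end Config

lemma exists_poly_le_exp (C b : Real) (hb : 0 < b) :
    ∃ N0 : Real, 0 < N0 ∧ ∀ N : Real, N0 ≤ N → C * (N ^ 2 + 1) ≤ Real.exp (b * N) := by
  have h1 : Tendsto (fun N : Real => C * (N ^ 2 + 1) * Real.exp (-b * N)) atTop (nhds 0) := by
    have h2 := fun k : Nat => tendsto_rpow_mul_exp_neg_mul_atTop_nhds_zero k b hb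
    have := ((h2 2).add (h2 0)).const_mul C
    simp only [add_zero, mul_zero, Real.rpow_natCast] at this
    refine this.congr fun N => ?_
    ring
  obtain ⟨N0, hN0⟩ := eventually_atTop.mp (h1.eventually (ge_mem_nhds (zero_lt_one)))
  refine ⟨max N0 1, by positivity, fun N hN => ?_⟩
  have h3 := hN0 N (le_trans (le_max_left _ _) hN)
  rw [neg_mul, Real.exp_neg, ← div_eq_mul_inv, div_le_one (Real.exp_pos _)] at h3
  exact h3

/-- burn-in estimates for the congestion dynamics (Lemma 3.2). -/
theorem statement9 (Q : Nat) (hQ : 2 ≤ Q) (rho : Real) (hrho0 : 0 < rho) (hrho1 : rho < 1)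
    (del : Real) (hdel : 0 < del) :
    ∃ cdel adel Ndel : Real, 0 < cdel ∧ 0 < adel ∧ 0 < Ndel ∧
      ∀ kap : Nat, 0 < kap → ∀ n : Nat, n = ⌊rho * ((kap * Q : Nat) : Real)⌋₊ →
      Ndel ≤ ((kap * Q : Nat) : Real) →
        ((∀ al : Real, adel ≤ al → ∀ sgs : ConfigState Q kap n,
            (∑ sg : ConfigState Q kap n,
                if ¬ configNear Q kap n rho sg del then
                  evolve (configP Q kap n) (delta sgs) ⌈al * ((kap * Q : Nat) : Real)⌉₊ sg
                else 0)
              ≤ Real.exp (-cdel * ((kap * Q : Nat) : Real))) ∧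
          (∀ sgs : ConfigState Q kap n, configNear Q kap n rho sgs del →
            hitProb (configP Q kap n) sgs ((kap * Q)^2)
                (fun sg => ¬ configNear Q kap n rho sg (2 * del))
              ≤ Real.exp (-cdel * ((kap * Q : Nat) : Real)))) := by
  have hQ0 : 0 < Q := by omega
  have hQr : (0:Real) < Q := by exact_mod_cast hQ0
  obtain ⟨e, he0, he1, he⟩ : ∃ e : Real, 0 < e ∧ e ≤ 1 ∧ 3 * e * Q ≤ del := by
    refine ⟨min (del / (3 * Q)) 1, by positivity, min_le_right _ _, ?_⟩
    have := min_le_left (del / (3 * Q)) 1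
    rw [le_div_iff₀ (by positivity)] at this
    linarith
  -- The deviation bound decays like `exp (-e ^ 2 N / 4)`; half of the exponent absorbs the factor
  -- `2 Q (N ^ 2 + 1)` of the union bounds.
  obtain ⟨N0, hN0, hpoly⟩ := exists_poly_le_exp (2 * Q) (e ^ 2 / 8) (by positivity)
  refine ⟨e ^ 2 / 8, 1 / e, max N0 (max (1 / e) (1 / rho)), by positivity, by positivity,
    by positivity, ?_⟩
  intro kap _ n hn hN
  have hbound := hpoly _ (le_trans (le_max_left _ _) hN)
  have hNe : 1 ≤ e * ((kap * Q : Nat) : Real) := by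
    have := (le_max_left _ _).trans ((le_max_right _ _).trans hN)
    rw [div_le_iff₀ he0] at this
    linarith
  have hNrho : 1 ≤ rho * ((kap * Q : Nat) : Real) := by
    have := (le_max_right _ _).trans ((le_max_right _ _).trans hN)
    rw [div_le_iff₀ hrho0] at this
    linarith
  have hNpos : 0 < ((kap * Q : Nat) : Real) := lt_of_lt_of_le hN0 (le_trans (le_max_left _ _) hN)
  have hn1 : (n : Real) ≤ rho * ((kap * Q : Nat) : Real) := hn ▸ Nat.floor_le (by linarith)
  have hn2 : rho * ((kap * Q : Nat) : Real) < n + 1 := hn ▸ Nat.lt_floor_add_one _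
  have hn3 : 1 ≤ n := by
    rw [hn]
    exact Nat.le_floor (by simpa using hNrho)
  have hnN' : (n : Real) ≤ ((kap * Q : Nat) : Real) := by nlinarith
  have hnN : n ≤ kap * Q := by exact_mod_cast hnN'
  obtain ⟨hr0, hr1, hr2⟩ := rate_bounds hn3 hnN
  have hexp : Real.exp (-(e ^ 2 / 8) * ((kap * Q : Nat) : Real)) =
      Real.exp (e ^ 2 / 8 * ((kap * Q : Nat) : Real)) *
        Real.exp (-(e ^ 2 / 4) * ((kap * Q : Nat) : Real)) := by
    rw [← Real.exp_add]
    congr 1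
    ring
  have hE := Real.exp_pos (-(e ^ 2 / 4) * ((kap * Q : Nat) : Real))
  constructor
  · intro al hal sgs
    set t := ⌈al * ((kap * Q : Nat) : Real)⌉₊ with ht
    have hev := sum_evolve_delta (p := configP Q kap n) sgs
      (fun sg => if ¬ configNear Q kap n rho sg del then 1 else 0) t
    simp only [mul_ite, mul_one, mul_zero] at hev
    rw [hev]
    have hat : (1 - ((kap * Q : Nat) : Real) / ((n : Real) * ((1 + kap * Q - n : Nat) : Real))) ^ t
        ≤ e := by
      set r := ((kap * Q : Nat) : Real) / ((n : Real) * ((1 + kap * Q - n : Nat) : Real))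
      have h1 : (1 - r) ^ t ≤ Real.exp (-r) ^ t :=
        pow_le_pow_left₀ (by linarith) (Real.one_sub_le_exp_neg r) t
      have h2 : al * ((kap * Q : Nat) : Real) ≤ t := Nat.le_ceil _
      have h3 : 1 / e ≤ t * r := by
        have h4 : al ≤ al * (r * ((kap * Q : Nat) : Real)) :=
          le_mul_of_one_le_right (le_trans (by positivity) hal) hr2
        nlinarith
      rw [← Real.exp_nat_mul] at h1
      refine h1.trans ?_
      rw [mul_neg, Real.exp_neg]
      refine inv_le_of_inv_le₀ he0 ?_
      rw [← one_div]
      linarith [Real.add_one_le_exp (t * r)]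
    refine (prob_bad_le hQ0 hn3 hnN he0 he1 t sgs _ fun x hx => ?_).trans ?_
    · by_contra! hcon
      exact hx (near_of_small hQ0 hNpos rfl he he0 hNe hn1 hn2 hnN'
        (pow_nonneg (by linarith) t) hat x sgs hcon)
    · rw [hexp]
      nlinarith [sq_nonneg ((kap * Q : Nat) : Real), mul_nonneg hQr.le (sq_nonneg ((kap * Q : Nat) : Real))]
  · intro sgs hsgs
    refine (hitProb_le configP_nonneg (sum_configP hn3 hnN) _ sgs _).trans ?_
    refine (Finset.sum_le_sum fun t _ => prob_bad_le hQ0 hn3 hnN he0 he1 t sgs _ fun x hx => ?_).trans ?_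
    · by_contra! hcon
      exact hx (near_of_near hQ0 hNpos rfl he he0 hNe hn1 hn2
        (pow_nonneg (by linarith) t) (pow_le_one₀ (by linarith) (by linarith)) x sgs hsgs hcon)
    · rw [hexp, Finset.sum_const, Finset.card_range, nsmul_eq_mul]
      have h1 := mul_le_mul_of_nonneg_right hbound hE.le
      refine le_trans (le_of_eq ?_) h1
      push_cast
      ring

end CongestionPaper
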